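/- Fix r > 1 and ε > 0. Then there is a constant C such that for all B ≥ 3: |#{(u,v) : u, v positive integers, gcd(u,v) = 1, max(u,v) ≤ B, B^(1/r)·u ≤ ε·v} − (3/π²)·ε·B^(2−1/r)| ≤ C·B·(log B)^(2/3)·(log log B)^(4/3). (Sub-critical zoom at the rational point [0:1] of ℙ¹: the limit measure is proportional to Lebesgue measure.) -/

import Mathlib

open Real


theorem mu_ind (W n : ℕ) (hn : 1 ≤ n) (hW : n ≤ W) (v : ℕ) :
    (∑ d ∈ Finset.Icc 1 W, if d ∣ n then (if d ∣ v then (ArithmeticFunction.moebius d : ℝ) else 0) else 0)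
      = if Nat.Coprime n v then 1 else 0 := by
  have h := congrArg (fun f => f (Nat.gcd n v)) ArithmeticFunction.moebius_mul_coe_zeta
  simp only [ArithmeticFunction.coe_mul_zeta_apply, ArithmeticFunction.one_apply] at h
  have h2 : ((∑ i ∈ (n.gcd v).divisors, ArithmeticFunction.moebius i : ℤ) : ℝ) = if Nat.Coprime n v then 1 else 0 := by
    rw [h]; simp [Nat.Coprime]
  rw [← h2]
  push_cast
  have e : (n.gcd v).divisors = (Finset.Icc 1 W).filter (fun d => d ∣ n ∧ d ∣ v) := by
    ext d
    simp only [Nat.mem_divisors, Finset.mem_filter, Finset.mem_Icc, Nat.dvd_gcd_iff]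
    constructor
    · rintro ⟨⟨h1, h2⟩, h3⟩
      exact ⟨⟨Nat.pos_of_dvd_of_pos h1 hn, (Nat.le_of_dvd hn h1).trans hW⟩, h1, h2⟩
    · rintro ⟨_, h1⟩
      exact ⟨h1, (Nat.gcd_pos_of_pos_left _ hn).ne'⟩
  rw [e, Finset.sum_filter]
  refine Finset.sum_congr rfl fun d _ => ?_
  by_cases h1 : d ∣ n <;> by_cases h2 : d ∣ v <;> simp [h1, h2]

theorem sum_dvd (W d : ℕ) (hd : 1 ≤ d) (f : ℕ → ℝ) :
    (∑ u ∈ Finset.Icc 1 W, if d ∣ u then f u else 0) = ∑ k ∈ Finset.Icc 1 (W / d), f (d * k) := by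
  rw [← Finset.sum_filter]
  symm
  refine Finset.sum_bij (fun k _ => d * k) ?_ ?_ ?_ ?_
  · intro k hk
    simp only [Finset.mem_Icc, Finset.mem_filter] at hk ⊢
    refine ⟨⟨Nat.mul_pos hd hk.1, ?_⟩, dvd_mul_right _ _⟩
    have := (Nat.le_div_iff_mul_le hd).1 hk.2
    linarith [mul_comm k d]
  · intro a _ b _ h
    exact Nat.eq_of_mul_eq_mul_left hd h
  · intro u hu
    simp only [Finset.mem_Icc, Finset.mem_filter] at hu
    obtain ⟨⟨h1, h2⟩, k, rfl⟩ := hu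
    refine ⟨k, ?_, rfl⟩
    simp only [Finset.mem_Icc]
    refine ⟨Nat.pos_of_mul_pos_left h1, (Nat.le_div_iff_mul_le hd).2 (by linarith [mul_comm k d])⟩
  · intros; rfl

theorem abs_mu (d : ℕ) : |(ArithmeticFunction.moebius d : ℝ)| ≤ 1 := by
  have := @ArithmeticFunction.abs_moebius_le_one d
  exact_mod_cast this

theorem mu_sum (W : ℕ) (hW : 1 ≤ W) :
    |∑ d ∈ Finset.Icc 1 W, (ArithmeticFunction.moebius d : ℝ) / d| ≤ 2 := by
  have h1 : ∑ d ∈ Finset.Icc 1 W, (ArithmeticFunction.moebius d : ℝ) * ((W / d : ℕ) : ℝ) = 1 := by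
    have : ∀ d ∈ Finset.Icc 1 W, (ArithmeticFunction.moebius d : ℝ) * ((W / d : ℕ) : ℝ) =
        ∑ u ∈ Finset.Icc 1 W, if d ∣ u then (if d ∣ 0 then (ArithmeticFunction.moebius d : ℝ) else 0) else 0 := by
      intro d hd
      rw [sum_dvd W d (Finset.mem_Icc.1 hd).1]
      simp [mul_comm]
    rw [Finset.sum_congr rfl this, Finset.sum_comm]
    rw [Finset.sum_congr rfl (fun u hu => mu_ind W u (Finset.mem_Icc.1 hu).1 (Finset.mem_Icc.1 hu).2 0)]
    rw [Finset.sum_eq_single 1]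
    · simp
    · intro b _ hb; simp [hb]
    · intro h; simp at h; omega
  have hWp : (0:ℝ) < W := by exact_mod_cast hW
  have h2 : |W * ∑ d ∈ Finset.Icc 1 W, (ArithmeticFunction.moebius d : ℝ) / d - 1| ≤ W := by
    rw [← h1, Finset.mul_sum, ← Finset.sum_sub_distrib]
    refine (Finset.abs_sum_le_sum_abs _ _).trans ?_
    refine (Finset.sum_le_sum (g := fun _ => (1:ℝ)) fun d hd => ?_).trans (by simp)
    have hd0 : (0:ℝ) < d := by exact_mod_cast (Finset.mem_Icc.1 hd).1
    have e : (W : ℝ) * ((ArithmeticFunction.moebius d : ℝ) / d) - (ArithmeticFunction.moebius d : ℝ) * ((W / d : ℕ) : ℝ) = (ArithmeticFunction.moebius d : ℝ) * ((W:ℝ) / d - ((W / d : ℕ) : ℝ)) := by ring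
    rw [e, abs_mul]
    refine mul_le_one₀ (abs_mu d) (abs_nonneg _) ?_
    have a1 : ((W / d : ℕ) : ℝ) ≤ W / d := Nat.cast_div_le
    have a2 : (W:ℝ) / d ≤ ((W / d : ℕ) : ℝ) + 1 := by
      rw [← Nat.floor_div_eq_div (K := ℝ)]; exact (Nat.lt_floor_add_one _).le
    rw [abs_le]; constructor <;> linarith
  have hW1 : (1:ℝ) ≤ W := by exact_mod_cast hW
  rw [abs_le] at h2 ⊢
  constructor <;> nlinarith

theorem mu_hasSum : HasSum (fun n : ℕ => (ArithmeticFunction.moebius n : ℝ) / (n:ℝ) ^ 2) (6 / π ^ 2) := by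
  have hs : (1:ℝ) < (2:ℂ).re := by norm_num
  have h1 := ArithmeticFunction.LSeries_zeta_mul_Lseries_moebius hs
  rw [ArithmeticFunction.LSeries_zeta_eq_riemannZeta hs, riemannZeta_two] at h1
  have h2 := (ArithmeticFunction.LSeriesSummable_moebius_iff.2 hs).LSeriesHasSum
  have hpi : (π:ℂ) ≠ 0 := by exact_mod_cast pi_ne_zero
  have h3 : LSeries (fun n => ((ArithmeticFunction.moebius n : ℤ) : ℂ)) 2 = ((6 / π^2 : ℝ) : ℂ) := by
    push_cast
    field_simp at h1 ⊢
    linear_combination h1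
  rw [h3, LSeriesHasSum] at h2
  rw [← Complex.hasSum_ofReal]
  convert h2 using 2 with n
  rcases eq_or_ne n 0 with rfl | hn
  · simp
  · rw [LSeries.term_of_ne_zero hn]; push_cast; norm_cast

theorem mu_tail (W : ℕ) (hW : 1 ≤ W) :
    |∑ d ∈ Finset.Icc 1 W, (ArithmeticFunction.moebius d : ℝ) / (d:ℝ)^2 - 6 / π ^ 2| ≤ (1:ℝ) / W := by
  have ht := mu_hasSum.tendsto_sum_nat
  have h2 := ((ht.const_sub (∑ d ∈ Finset.Icc 1 W, (ArithmeticFunction.moebius d : ℝ) / (d:ℝ)^2))).abs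
  refine le_of_tendsto h2 ?_
  filter_upwards [Filter.eventually_ge_atTop (W+1)] with M hM
  have e : ∑ i ∈ Finset.range M, (ArithmeticFunction.moebius i : ℝ) / (i:ℝ)^2 =
    ∑ d ∈ Finset.Icc 1 W, (ArithmeticFunction.moebius d : ℝ) / (d:ℝ)^2 + ∑ d ∈ Finset.Ioc W (M-1), (ArithmeticFunction.moebius d : ℝ) / (d:ℝ)^2 := by
    rw [← Finset.sum_union]
    · symm
      apply Finset.sum_subset
      · intro x; simp only [Finset.mem_union, Finset.mem_Icc, Finset.mem_Ioc, Finset.mem_range]; omega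
      · intro x; simp only [Finset.mem_union, Finset.mem_Icc, Finset.mem_Ioc, Finset.mem_range]; intro h1 h2
        have : x = 0 := by omega
        simp [this]
    · rw [Finset.disjoint_left]; intro x; simp only [Finset.mem_Icc, Finset.mem_Ioc]; omega
  rw [e]
  rw [sub_add_cancel_left, abs_neg]
  refine (Finset.abs_sum_le_sum_abs _ _).trans ?_
  have h3 := sum_Ioc_inv_sq_le_sub (α := ℝ) (k := W) (n := M - 1) (by omega) (by omega)
  have h4 : (0:ℝ) ≤ ((M-1 : ℕ):ℝ)⁻¹ := by positivity
  refine (Finset.sum_le_sum (g := fun i : ℕ => ((i:ℝ)^2)⁻¹) fun d hd => ?_).trans (h3.trans (by rw [one_div]; linarith))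
  rw [abs_div, abs_of_nonneg (by positivity : (0:ℝ) ≤ (d:ℝ)^2), div_eq_mul_inv]
  exact mul_le_of_le_one_left (by positivity) (abs_mu d)

theorem inner_count (δ y a : ℝ) (hδ : 0 < δ) (ha : 0 < a) (hay : a / δ ≤ y) :
    |(∑ m ∈ Finset.Icc 1 ⌊y⌋₊, if a ≤ δ * (m:ℝ) then (1:ℝ) else 0) - (y - a / δ)| ≤ 1 := by
  have had : 0 < a / δ := by positivity
  have e : (Finset.Icc 1 ⌊y⌋₊).filter (fun m : ℕ => a ≤ δ * (m:ℝ)) = Finset.Icc ⌈a / δ⌉₊ ⌊y⌋₊ := by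
    ext m
    simp only [Finset.mem_filter, Finset.mem_Icc, Nat.ceil_le]
    rw [div_le_iff₀ hδ, mul_comm δ]
    constructor
    · rintro ⟨⟨_, h2⟩, h3⟩; exact ⟨h3, h2⟩
    · rintro ⟨h1, h2⟩
      refine ⟨⟨?_, h2⟩, h1⟩
      rcases Nat.eq_zero_or_pos m with rfl | h
      · simp at h1; linarith
      · exact h
  rw [← Finset.sum_filter, e, Finset.sum_const, Nat.card_Icc, nsmul_eq_mul, mul_one]
  have hy : 0 ≤ y := had.le.trans hay
  have h1 := Nat.floor_le hy
  have h2 := Nat.lt_floor_add_one y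
  have h3 := Nat.le_ceil (a / δ)
  have h4 := Nat.ceil_lt_add_one had.le
  have h5 : ⌈a / δ⌉₊ ≤ ⌊y⌋₊ + 1 := by
    apply Nat.ceil_le.2; push_cast; linarith
  rw [Nat.cast_sub h5]; push_cast
  rw [abs_le]; constructor <;> linarith

theorem sum_lin (n : ℕ) (x : ℝ) :
    ∑ k ∈ Finset.Icc 1 n, (x - (k:ℝ)) = x * n - n * (n + 1) / 2 := by
  induction n with
  | zero => simp
  | succ n ih => rw [Finset.sum_Icc_succ_top (by omega), ih]; push_cast; ring

theorem A_bound (δ B : ℝ) (hδ : 0 < δ) (hB : 0 < B) (d : ℕ) (hd : 1 ≤ d) :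
    |(∑ k ∈ Finset.Icc 1 (⌊δ * B⌋₊ / d), ∑ m ∈ Finset.Icc 1 (⌊B⌋₊ / d),
        if ((d * k : ℕ):ℝ) ≤ δ * ((d * m : ℕ) : ℝ) then (1:ℝ) else 0)
      - (1 / δ) * ((δ * B / d) ^ 2 / 2 - (δ * B / d) / 2)| ≤ δ * B / d + 1 / δ := by
  have hd0 : (0:ℝ) < d := by exact_mod_cast hd
  rw [← Nat.floor_div_natCast, ← Nat.floor_div_natCast]
  set x := δ * B / d with hx
  have hx0 : 0 ≤ x := by positivity
  have hn1 := Nat.floor_le hx0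
  have hn2 := Nat.lt_floor_add_one x
  set n := ⌊x⌋₊
  have h1 : |(∑ k ∈ Finset.Icc 1 n, ∑ m ∈ Finset.Icc 1 ⌊B / d⌋₊,
        if ((d * k : ℕ):ℝ) ≤ δ * ((d * m : ℕ) : ℝ) then (1:ℝ) else 0)
      - ∑ k ∈ Finset.Icc 1 n, (1 / δ) * (x - k)| ≤ n := by
    rw [← Finset.sum_sub_distrib]
    refine (Finset.abs_sum_le_sum_abs _ _).trans ?_
    refine (Finset.sum_le_sum (g := fun _ => (1:ℝ)) fun k hk => ?_).trans (by simp)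
    have hk1 : (1:ℝ) ≤ k := by exact_mod_cast (Finset.mem_Icc.1 hk).1
    have hk2 : (k:ℝ) ≤ n := by exact_mod_cast (Finset.mem_Icc.1 hk).2
    have := inner_count δ (B / d) k hδ (by linarith) (by
      rw [div_le_iff₀ hδ]
      have : B / d * δ = x := by rw [hx]; ring
      linarith)
    have ea : (1 / δ) * (x - k) = B / d - k / δ := by rw [hx]; field_simp
    have eb : (∑ m ∈ Finset.Icc 1 ⌊B / d⌋₊, if ((d * k : ℕ):ℝ) ≤ δ * ((d * m : ℕ) : ℝ) then (1:ℝ) else 0)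
        = ∑ m ∈ Finset.Icc 1 ⌊B / d⌋₊, if (k:ℝ) ≤ δ * (m : ℝ) then (1:ℝ) else 0 := by
      refine Finset.sum_congr rfl fun m _ => ?_
      congr 1
      push_cast
      rw [eq_iff_iff]
      constructor <;> intro h
      · exact le_of_mul_le_mul_left (by linarith) hd0
      · nlinarith
    rw [ea, eb]; exact this
  rw [← Finset.mul_sum, sum_lin] at h1
  have h2 : |(1 / δ) * (x * n - n * (n + 1) / 2) - (1 / δ) * (x ^ 2 / 2 - x / 2)| ≤ 1 / δ := by
    rw [← mul_sub, abs_mul, abs_of_pos (by positivity : 0 < 1 / δ)]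
    refine mul_le_of_le_one_right (by positivity) ?_
    have : x * n - n * (n + 1) / 2 - (x ^ 2 / 2 - x / 2) = (x - n) * (1 - (x - n)) / 2 := by ring
    rw [this, abs_le]
    constructor <;> nlinarith
  have := abs_sub_le _ _ _ |>.trans (add_le_add h1 h2)
  linarith

theorem core (δ B : ℝ) (hδ : 0 < δ) (hB : 1 ≤ B) (hδ1 : δ ≤ 1) (hU : 1 ≤ δ * B) (S : Set (ℕ × ℕ))
    (hS : ∀ p : ℕ × ℕ, p ∈ S ↔ (0 < p.1 ∧ 0 < p.2 ∧ Nat.Coprime p.1 p.2 ∧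
            ((max p.1 p.2 : ℕ) : ℝ) ≤ B ∧ (p.1 : ℝ) ≤ δ * (p.2 : ℝ))) :
    |(S.ncard : ℝ) - 3 / π ^ 2 * (δ * B ^ 2)| ≤ δ * B * (1 + Real.log (δ * B)) + 3 * B := by
  set U := δ * B with hUdef
  set W := ⌊U⌋₊ with hW
  have hW1 : 1 ≤ W := Nat.le_floor (by simpa using hU)
  have hWU : (W:ℝ) ≤ U := Nat.floor_le (by linarith)
  have hUW : U < W + 1 := Nat.lt_floor_add_one U
  have hW1' : (1:ℝ) ≤ W := by exact_mod_cast hW1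
  have hB0 : 0 < B := by linarith
  have e1 : S = ((Finset.Icc 1 W ×ˢ Finset.Icc 1 ⌊B⌋₊).filter
      (fun p => Nat.Coprime p.1 p.2 ∧ (p.1 : ℝ) ≤ δ * (p.2 : ℝ)) : Finset (ℕ × ℕ)) := by
    ext ⟨u, v⟩
    rw [hS]
    simp only [Finset.coe_filter, Finset.mem_product, Finset.mem_Icc, Set.mem_ofPred_eq]
    constructor
    · rintro ⟨h1, h2, h3, h4, h5⟩
      have h4' : (v:ℝ) ≤ B := le_trans (by exact_mod_cast le_max_right u v) h4
      refine ⟨⟨⟨h1, Nat.le_floor ?_⟩, h2, Nat.le_floor h4'⟩, h3, h5⟩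
      exact h5.trans (mul_le_mul_of_nonneg_left h4' hδ.le)
    · rintro ⟨⟨⟨h1, h1'⟩, h2, h4⟩, h3, h5⟩
      refine ⟨h1, h2, h3, ?_, h5⟩
      have hv : (v:ℝ) ≤ B := (Nat.le_floor_iff hB0.le).1 h4
      have hu : (u:ℝ) ≤ v := h5.trans (mul_le_of_le_one_left (by positivity) hδ1)
      have : max u v = v := max_eq_right (by exact_mod_cast hu)
      rw [this]; exact hv
  have e2 : (S.ncard : ℝ) = ∑ d ∈ Finset.Icc 1 W, (ArithmeticFunction.moebius d : ℝ) *
      (∑ k ∈ Finset.Icc 1 (W / d), ∑ m ∈ Finset.Icc 1 (⌊B⌋₊ / d),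
        if ((d * k : ℕ):ℝ) ≤ δ * ((d * m : ℕ) : ℝ) then (1:ℝ) else 0) := by
    rw [e1, Set.ncard_coe_finset, Finset.card_filter, Nat.cast_sum]
    simp only [Nat.cast_ite, Nat.cast_one, Nat.cast_zero]
    rw [Finset.sum_product]
    have : ∀ u ∈ Finset.Icc 1 W, ∀ v ∈ Finset.Icc 1 ⌊B⌋₊,
      (if (Nat.Coprime u v ∧ (u:ℝ) ≤ δ * (v:ℝ)) then (1:ℝ) else 0) =
       ∑ d ∈ Finset.Icc 1 W, if d ∣ u then (if d ∣ v then (ArithmeticFunction.moebius d : ℝ) * (if (u:ℝ) ≤ δ * (v:ℝ) then (1:ℝ) else 0) else 0) else 0 := by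
      intro u hu v hv
      have h := mu_ind W u (Finset.mem_Icc.1 hu).1 (Finset.mem_Icc.1 hu).2 v
      by_cases hc : (u:ℝ) ≤ δ * (v:ℝ)
      · simp only [hc, and_true, if_true, mul_one]; exact h.symm
      · simp [hc]
    rw [Finset.sum_congr rfl fun u hu => Finset.sum_congr rfl fun v hv => this u hu v hv]
    rw [Finset.sum_congr rfl fun u hu => Finset.sum_comm, Finset.sum_comm]
    refine Finset.sum_congr rfl fun d hd => ?_
    have hd1 := (Finset.mem_Icc.1 hd).1
    rw [Finset.mul_sum]
    rw [← sum_dvd W d hd1 (fun u => (ArithmeticFunction.moebius d : ℝ) * ∑ m ∈ Finset.Icc 1 (⌊B⌋₊ / d),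
        if (u:ℝ) ≤ δ * ((d * m : ℕ) : ℝ) then (1:ℝ) else 0)]
    refine Finset.sum_congr rfl fun u hu => ?_
    split_ifs
    · rw [Finset.mul_sum]
      exact sum_dvd ⌊B⌋₊ d hd1 (fun v => (ArithmeticFunction.moebius d : ℝ) * if (u:ℝ) ≤ δ * (v : ℝ) then (1:ℝ) else 0)
    · simp
  have h1 : |(S.ncard : ℝ) - ∑ d ∈ Finset.Icc 1 W, (ArithmeticFunction.moebius d : ℝ) *
      ((1 / δ) * ((U / d) ^ 2 / 2 - (U / d) / 2))| ≤ U * (1 + Real.log U) + B := by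
    rw [e2, ← Finset.sum_sub_distrib]
    refine (Finset.abs_sum_le_sum_abs _ _).trans ?_
    refine (Finset.sum_le_sum (g := fun d : ℕ => U / d + 1 / δ) fun d hd => ?_).trans ?_
    · rw [← mul_sub, abs_mul]
      refine le_trans (mul_le_of_le_one_left (abs_nonneg _) (abs_mu d)) ?_
      exact A_bound δ B hδ hB0 d (Finset.mem_Icc.1 hd).1
    · rw [Finset.sum_add_distrib]
      refine add_le_add ?_ ?_
      · have hh := harmonic_floor_le_one_add_log U hU
        rw [harmonic_eq_sum_Icc] at hh
        push_cast at hh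
        simp only [div_eq_mul_inv]
        rw [← Finset.mul_sum]
        exact mul_le_mul_of_nonneg_left hh (by linarith)
      · simp only [Finset.sum_const, Nat.card_Icc, nsmul_eq_mul, Nat.add_sub_cancel]
        rw [mul_one_div, div_le_iff₀ hδ]
        linarith [mul_comm B δ]
  have e3 : ∑ d ∈ Finset.Icc 1 W, (ArithmeticFunction.moebius d : ℝ) *
      ((1 / δ) * ((U / d) ^ 2 / 2 - (U / d) / 2)) = δ * B ^ 2 / 2 * (∑ d ∈ Finset.Icc 1 W, (ArithmeticFunction.moebius d : ℝ) / (d:ℝ)^2)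
      - B / 2 * ∑ d ∈ Finset.Icc 1 W, (ArithmeticFunction.moebius d : ℝ) / d := by
    rw [Finset.mul_sum, Finset.mul_sum, ← Finset.sum_sub_distrib]
    refine Finset.sum_congr rfl fun d hd => ?_
    have hd0 : (0:ℝ) < d := by exact_mod_cast (Finset.mem_Icc.1 hd).1
    rw [hUdef]; field_simp
  rw [e3] at h1
  have h2 := mu_sum W hW1
  have h3 := mu_tail W hW1
  set P := ∑ d ∈ Finset.Icc 1 W, (ArithmeticFunction.moebius d : ℝ) / (d:ℝ)^2
  set Q := ∑ d ∈ Finset.Icc 1 W, (ArithmeticFunction.moebius d : ℝ) / d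
  have h4 : |δ * B ^ 2 / 2 * P - δ * B ^ 2 / 2 * (6 / π ^ 2)| ≤ B := by
    rw [← mul_sub, abs_mul, abs_of_nonneg (by positivity)]
    refine (mul_le_mul_of_nonneg_left h3 (by positivity)).trans ?_
    rw [mul_one_div, div_le_iff₀ (by linarith)]
    have : δ * B ^ 2 / 2 = B * (U / 2) := by rw [hUdef]; ring
    rw [this]
    exact mul_le_mul_of_nonneg_left (by linarith) hB0.le
  have h5 : |B / 2 * Q| ≤ B := by
    rw [abs_mul, abs_of_pos (by positivity)]
    nlinarith
  have h6 : 3 / π ^ 2 * (δ * B ^ 2) = δ * B ^ 2 / 2 * (6 / π ^ 2) := by ring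
  rw [h6]
  rw [abs_le] at *
  constructor <;> linarith

theorem ev_bound (r ε : ℝ) (hr : 1 < r) (hε : 0 < ε) :
    ∃ B0 : ℝ, ∀ B : ℝ, B0 ≤ B → 3 ≤ B → 
      |(Set.ncard {p : ℕ × ℕ | 0 < p.1 ∧ 0 < p.2 ∧ Nat.Coprime p.1 p.2 ∧
            ((max p.1 p.2 : ℕ) : ℝ) ≤ B ∧ B ^ (1 / r) * (p.1 : ℝ) ≤ ε * (p.2 : ℝ)} : ℝ) -
          3 / π ^ 2 * ε * B ^ (2 - 1 / r)| ≤ 4 * B := by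
  have hr0 : 0 < r := by linarith
  have hs : 0 < 1 / r := by positivity
  have hs1 : 1 / r < 1 := by rw [div_lt_one hr0]; exact hr
  set s := 1 / r
  have t1 : ∀ᶠ B : ℝ in Filter.atTop, ε ≤ B ^ s := (tendsto_rpow_atTop hs).eventually_ge_atTop ε
  have t2 : ∀ᶠ B : ℝ in Filter.atTop, 1 / ε ≤ B ^ (1 - s) := (tendsto_rpow_atTop (by linarith)).eventually_ge_atTop _
  have t3 : ∀ᶠ B : ℝ in Filter.atTop, ε * (1 + Real.log B) ≤ B ^ s := by
    have ho : (fun B : ℝ => ε * (1 + Real.log B)) =o[Filter.atTop] (fun B : ℝ => B ^ s) := by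
      refine Asymptotics.IsLittleO.const_mul_left (Asymptotics.IsLittleO.add ?_ (isLittleO_log_rpow_atTop hs)) _
      exact Asymptotics.isLittleO_const_left.2 (Or.inr ((tendsto_norm_atTop_atTop).comp (tendsto_rpow_atTop hs)))
    have := ho.bound (c := 1) one_pos
    filter_upwards [this, Filter.eventually_ge_atTop 0] with B h hB
    rw [one_mul, Real.norm_of_nonneg (rpow_nonneg hB _)] at h
    exact (le_abs_self _).trans h
  obtain ⟨B0, hB0⟩ := Filter.eventually_atTop.1 (t1.and (t2.and t3))
  refine ⟨B0, fun B hB hB3 => ?_⟩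
  obtain ⟨h1, h2, h3⟩ := hB0 B hB
  have hBp : 0 < B := by linarith
  have hBs : 0 < B ^ s := rpow_pos_of_pos hBp _
  have hδ : 0 < ε / B ^ s := by positivity
  have hδ1 : ε / B ^ s ≤ 1 := (div_le_one hBs).2 h1
  have hU : 1 ≤ ε / B ^ s * B := by
    rw [rpow_sub hBp, rpow_one, div_le_div_iff₀ hε hBs] at h2
    rw [div_mul_eq_mul_div, le_div_iff₀ hBs]; linarith
  have h := core (ε / B ^ s) B hδ (by linarith) hδ1 hU {p : ℕ × ℕ | 0 < p.1 ∧ 0 < p.2 ∧ Nat.Coprime p.1 p.2 ∧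
            ((max p.1 p.2 : ℕ) : ℝ) ≤ B ∧ B ^ s * (p.1 : ℝ) ≤ ε * (p.2 : ℝ)} (by
    rintro ⟨u, v⟩
    simp only [Set.mem_ofPred_eq]
    rw [div_mul_eq_mul_div, le_div_iff₀ hBs, mul_comm (u:ℝ)])
  have e : 3 / π ^ 2 * (ε / B ^ s * B ^ 2) = 3 / π ^ 2 * ε * B ^ (2 - s) := by
    rw [rpow_sub hBp, rpow_two]; ring
  rw [e] at h
  refine h.trans ?_
  have hl : Real.log (ε / B ^ s * B) ≤ Real.log B :=
    Real.log_le_log (by linarith) (mul_le_of_le_one_left hBp.le hδ1)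
  have : ε / B ^ s * B * (1 + Real.log (ε / B ^ s * B)) ≤ B := by
    calc _ ≤ ε / B ^ s * B * (1 + Real.log B) := by gcongr
      _ = (ε * (1 + Real.log B)) / B ^ s * B := by ring
      _ ≤ 1 * B := by gcongr; exact (div_le_one hBs).2 h3
      _ = B := one_mul B
  linarith

theorem triv_bound (r ε B B0 : ℝ) (hr : 1 < r) (hε : 0 < ε) (hB : 3 ≤ B) (hB0 : B ≤ B0) :
      |(Set.ncard {p : ℕ × ℕ | 0 < p.1 ∧ 0 < p.2 ∧ Nat.Coprime p.1 p.2 ∧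
            ((max p.1 p.2 : ℕ) : ℝ) ≤ B ∧ B ^ (1 / r) * (p.1 : ℝ) ≤ ε * (p.2 : ℝ)} : ℝ) -
          3 / π ^ 2 * ε * B ^ (2 - 1 / r)| ≤ B0 ^ 2 + 3 / π ^ 2 * ε * B0 ^ 2 := by
  have hn : (Set.ncard {p : ℕ × ℕ | 0 < p.1 ∧ 0 < p.2 ∧ Nat.Coprime p.1 p.2 ∧
            ((max p.1 p.2 : ℕ) : ℝ) ≤ B ∧ B ^ (1 / r) * (p.1 : ℝ) ≤ ε * (p.2 : ℝ)} : ℝ) ≤ B0 ^ 2 := by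
    have h1 := Set.ncard_le_ncard (s := {p : ℕ × ℕ | 0 < p.1 ∧ 0 < p.2 ∧ Nat.Coprime p.1 p.2 ∧
            ((max p.1 p.2 : ℕ) : ℝ) ≤ B ∧ B ^ (1 / r) * (p.1 : ℝ) ≤ ε * (p.2 : ℝ)})
      (t := ((Finset.Icc 1 ⌊B0⌋₊ ×ˢ Finset.Icc 1 ⌊B0⌋₊ : Finset (ℕ × ℕ)) : Set (ℕ × ℕ))) (by
        rintro ⟨u, v⟩ ⟨h1, h2, _, h4, _⟩
        simp only at h1 h2 h4
        simp only [Finset.coe_product, Finset.coe_Icc, Set.mem_prod, Set.mem_Icc]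
        refine ⟨⟨h1, Nat.le_floor ?_⟩, h2, Nat.le_floor ?_⟩
        · exact le_trans (le_trans (by exact_mod_cast le_max_left u v) h4) hB0
        · exact le_trans (le_trans (by exact_mod_cast le_max_right u v) h4) hB0) (Finset.finite_toSet _)
    rw [Set.ncard_coe_finset, Finset.card_product, Nat.card_Icc, Nat.add_sub_cancel] at h1
    have h2 : (⌊B0⌋₊ : ℝ) ≤ B0 := Nat.floor_le (by linarith)
    calc _ ≤ ((⌊B0⌋₊ * ⌊B0⌋₊ : ℕ) : ℝ) := by exact_mod_cast h1
      _ = (⌊B0⌋₊ : ℝ) ^ 2 := by push_cast; ring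
      _ ≤ _ := by gcongr
  have hp : B ^ (2 - 1 / r) ≤ B0 ^ 2 := by
    have : 0 < 1 / r := by have : 0 < r := by linarith
                           positivity
    calc B ^ (2 - 1 / r) ≤ B ^ (2:ℝ) := rpow_le_rpow_of_exponent_le (by linarith) (by linarith)
      _ = B ^ 2 := rpow_two B
      _ ≤ _ := by gcongr
  have hp0 : 0 ≤ B ^ (2 - 1 / r) := rpow_nonneg (by linarith) _
  refine (abs_sub _ _).trans ?_
  rw [Nat.abs_cast, abs_of_nonneg (by positivity)]
  exact add_le_add hn (by gcongr)

theorem stmt_18 (r ε : ℝ) (hr : 1 < r) (hε : 0 < ε) :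
    ∃ C : ℝ, ∀ B : ℝ, B ≥ 3 →
      |(Set.ncard {p : ℕ × ℕ | 0 < p.1 ∧ 0 < p.2 ∧ Nat.Coprime p.1 p.2 ∧
            ((max p.1 p.2 : ℕ) : ℝ) ≤ B ∧ B ^ (1 / r) * (p.1 : ℝ) ≤ ε * (p.2 : ℝ)} : ℝ) -
          3 / π ^ 2 * ε * B ^ (2 - 1 / r)| ≤
        C * B * Real.log B ^ ((2 : ℝ) / 3) * Real.log (Real.log B) ^ ((4 : ℝ) / 3) := by
  obtain ⟨B0, hB0⟩ := ev_bound r ε hr hε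
  have l3 : 1 < Real.log 3 := by
    rw [Real.lt_log_iff_exp_lt (by norm_num)]
    exact Real.exp_one_lt_d9.trans (by norm_num)
  have ll3 : 0 < Real.log (Real.log 3) := Real.log_pos l3
  set c := Real.log 3 ^ ((2 : ℝ) / 3) * Real.log (Real.log 3) ^ ((4 : ℝ) / 3) with hc
  have hc0 : 0 < c := by positivity
  set K := B0 ^ 2 + 3 / π ^ 2 * ε * B0 ^ 2 with hK
  have hK0 : 0 ≤ K := by positivity
  refine ⟨(4 + K) / c, fun B hB => ?_⟩
  have hcB : c ≤ Real.log B ^ ((2 : ℝ) / 3) * Real.log (Real.log B) ^ ((4 : ℝ) / 3) := by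
    have a1 : Real.log 3 ≤ Real.log B := Real.log_le_log (by norm_num) hB
    have a2 : Real.log (Real.log 3) ≤ Real.log (Real.log B) := Real.log_le_log (by linarith) a1
    have a3 : 0 < Real.log B := by linarith
    rw [hc]; gcongr
  have key : (4 + K) * B ≤ (4 + K) / c * B * Real.log B ^ ((2 : ℝ) / 3) * Real.log (Real.log B) ^ ((4 : ℝ) / 3) := by
    calc (4 + K) * B = (4 + K) / c * B * c := by field_simp
      _ ≤ (4 + K) / c * B * (Real.log B ^ ((2 : ℝ) / 3) * Real.log (Real.log B) ^ ((4 : ℝ) / 3)) := by gcongr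
      _ = _ := by ring
  refine le_trans ?_ key
  rcases le_total B0 B with h | h
  · exact (hB0 B h hB).trans (by nlinarith)
  · exact (triv_bound r ε B B0 hr hε hB h).trans (by nlinarith)
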